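/- If R contains a subfield K (a division subring with the same 1) such that R is a finite-dimensional left vector space over K, then R has stable rank 2; in particular R is Dedekind-finite. -/

import Mathlib

/-!
Call the condition "`a * x + b * y = 1` implies that some `a + b * c` is right invertible"
the stable range condition.  Since left ideals of `R` are `K`-subspaces, `R` is left Artinian, so
its Jacobson radical `J` is nilpotent and `R ⧸ J` is semisimple.  An element that is
right invertible modulo a nilpotent ideal is right invertible, so it suffices to treat `R ⧸ J`,
which by Wedderburn–Artin is a finite product of matrix rings over division rings.  The condition
passes to products, and for matrices over a division ring it is linear algebra
(`StableRange.exists_injective_add`): if `ker α ∩ ker β = 0`, then `γ` is chosen so that `γ ∘ β`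
maps `ker α` isomorphically onto a complement of `range α`, which makes `α + γ ∘ β` injective.

Left Artinian rings are also Dedekind-finite: if `a * b = 1`, right multiplication by `a` is an
injective, hence surjective, endomorphism of the left module `R`, so `a` has a left inverse as well.
-/


open Matrix

/-- A pair `(a,b)` is admissible if it is the first row of an invertible 2×2 matrix. -/
def Admissible {R : Type*} [Ring R] (a b : R) : Prop :=
  ∃ c d : R, IsUnit (Matrix.of ![![a, b], ![c, d]])

/-- The cyclic left submodule of `R²` generated by a vector. -/
def cyc {R : Type*} [Ring R] (v : Fin 2 → R) : Submodule R (Fin 2 → R) :=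
  Submodule.span R {v}

/-- The projective line over `R`: the orbit of `R·(1,0)` under `GL₂(R)`
(acting by right multiplication on row vectors). -/
def ProjLine (R : Type*) [Ring R] : Set (Submodule R (Fin 2 → R)) :=
  {p | ∃ γ : (Matrix (Fin 2) (Fin 2) R)ˣ,
    p = cyc (Matrix.vecMul ![1, 0] (γ.val))}

/-- Two points are distant if the pair lies in the `GL₂(R)`-orbit of
`(R·(1,0), R·(0,1))`. -/
def Distant {R : Type*} [Ring R] (p q : Submodule R (Fin 2 → R)) : Prop :=
  ∃ γ : (Matrix (Fin 2) (Fin 2) R)ˣ,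
    p = cyc (Matrix.vecMul ![1, 0] (γ.val)) ∧
    q = cyc (Matrix.vecMul ![0, 1] (γ.val))

/-- The stable range condition for unimodular pairs: whenever `aS + bS = S`, some `a + b * c` is
right invertible. -/
def StableRange (S : Type*) [Ring S] : Prop :=
  ∀ a b : S, (∃ x y : S, a * x + b * y = 1) → ∃ c r : S, (a + b * c) * r = 1

namespace StableRange

theorem of_ringEquiv {S T : Type*} [Ring S] [Ring T] (e : S ≃+* T) (h : StableRange T) :
    StableRange S := by
  rintro a b ⟨x, y, hxy⟩
  obtain ⟨c, r, hcr⟩ := h (e a) (e b) ⟨e x, e y, by rw [← map_mul, ← map_mul, ← map_add, hxy, map_one]⟩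
  refine ⟨e.symm c, e.symm r, e.injective ?_⟩
  simpa using hcr

theorem pi {ι : Type*} {S : ι → Type*} [∀ i, Ring (S i)] (h : ∀ i, StableRange (S i)) :
    StableRange (∀ i, S i) := by
  rintro a b ⟨x, y, hxy⟩
  choose c r hcr using fun i => h i (a i) (b i) ⟨x i, y i, congrFun hxy i⟩
  exact ⟨c, r, funext hcr⟩

/-- The dimension of `ker α` equals that of a complement `C` of `range α`; any map into `C` that
extends an isomorphism `β (ker α) ≃ C` serves as `γ`, as its values cannot cancel those of `α`. -/
theorem exists_injective_add {D V : Type*} [DivisionRing D] [AddCommGroup V] [Module D V]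
    [FiniteDimensional D V] (α β : V →ₗ[D] V)
    (h : ∀ v, α v = 0 → β v = 0 → v = 0) :
    ∃ γ : V →ₗ[D] V, Function.Injective (α + γ ∘ₗ β) := by
  obtain ⟨C, hC⟩ := Submodule.exists_isCompl (LinearMap.range α)
  have hdim : Module.finrank D (LinearMap.ker α) = Module.finrank D C := by
    have h₁ := LinearMap.finrank_range_add_finrank_ker α
    have h₂ := Submodule.finrank_add_eq_of_isCompl hC
    omega
  let e : LinearMap.ker α ≃ₗ[D] C := LinearEquiv.ofFinrankEq _ _ hdim
  obtain ⟨g, hg⟩ := (β ∘ₗ (LinearMap.ker α).subtype).exists_leftInverse_of_injective <| by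
    rw [LinearMap.ker_eq_bot']
    rintro ⟨v, hv⟩ hβ
    exact Subtype.ext (h v hv hβ)
  refine ⟨C.subtype ∘ₗ e.toLinearMap ∘ₗ g, ?_⟩
  rw [← LinearMap.ker_eq_bot, LinearMap.ker_eq_bot']
  intro v hv
  have hv' : α v + (e (g (β v)) : V) = 0 := hv
  have hα : α v = 0 := by
    refine Submodule.disjoint_def.mp hC.disjoint _ ⟨v, rfl⟩ ?_
    rw [eq_neg_of_add_eq_zero_left hv']
    exact C.neg_mem (e (g (β v))).2
  have hgv : g (β v) = ⟨v, hα⟩ := LinearMap.congr_fun hg ⟨v, hα⟩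
  rw [hα, zero_add, hgv] at hv'
  have he : e ⟨v, hα⟩ = 0 := Subtype.ext hv'
  exact congrArg Subtype.val (e.map_eq_zero_iff.mp he)

/-- Matrices act on row vectors from the right, which is linear for left scalars and
reverses the order of multiplication. -/
theorem matrix (n : Type*) [Fintype n] [DecidableEq n] (D : Type*) [DivisionRing D] :
    StableRange (Matrix n n D) := by
  rintro a b ⟨x, y, hxy⟩
  obtain ⟨γ, hγ⟩ := exists_injective_add a.toLinearMapRight' b.toLinearMapRight' fun v ha hb => by
    have ha' : v ᵥ* a = 0 := ha
    have hb' : v ᵥ* b = 0 := hb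
    calc v = v ᵥ* (a * x + b * y) := by rw [hxy, vecMul_one]
      _ = (v ᵥ* a) ᵥ* x + (v ᵥ* b) ᵥ* y := by rw [vecMul_add, vecMul_vecMul, vecMul_vecMul]
      _ = 0 := by rw [ha', hb', zero_vecMul, zero_vecMul, add_zero]
  obtain ⟨ρ, hρ⟩ := LinearMap.exists_leftInverse_of_injective _ (LinearMap.ker_eq_bot.mpr hγ)
  refine ⟨γ.toMatrixRight', ρ.toMatrixRight', toLinearMapRight'.injective ?_⟩
  rw [toLinearMapRight'_mul, map_add, toLinearMapRight'_mul, toLinearMapRight'_one]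
  simpa using hρ

theorem of_isSemisimpleRing (S : Type*) [Ring S] [IsSemisimpleRing S] : StableRange S := by
  obtain ⟨n, D, d, _, _, ⟨e⟩⟩ := IsSemisimpleRing.exists_ringEquiv_pi_matrix_divisionRing S
  exact of_ringEquiv e (pi fun i => matrix _ _)

theorem of_isArtinianRing (R : Type*) [Ring R] [IsArtinianRing R] : StableRange R := by
  rintro a b ⟨x, y, hxy⟩
  let q := Ideal.Quotient.mk (Ring.jacobson R)
  obtain ⟨c, r, hcr⟩ := of_isSemisimpleRing (R ⧸ Ring.jacobson R) (q a) (q b)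
    ⟨q x, q y, by rw [← map_mul, ← map_mul, ← map_add, hxy, map_one]⟩
  obtain ⟨c, rfl⟩ := Ideal.Quotient.mk_surjective c
  obtain ⟨r, rfl⟩ := Ideal.Quotient.mk_surjective r
  rw [← map_mul, ← map_add, ← map_mul, ← map_one q] at hcr
  have hj : 1 - (a + b * c) * r ∈ Ring.jacobson R := (Ideal.Quotient.eq).mp hcr.symm
  obtain ⟨m, hm⟩ := IsSemiprimaryRing.isNilpotent (R := R)
  have hnil : IsNilpotent (1 - (a + b * c) * r) :=
    ⟨m, by simpa [hm] using Ideal.pow_mem_pow hj m⟩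
  obtain ⟨u, hu⟩ := hnil.isUnit_one_sub
  rw [sub_sub_cancel] at hu
  exact ⟨c, r * ↑u⁻¹, by rw [← mul_assoc, ← hu, u.mul_inv]⟩

end StableRange

theorem stmt10 {K R : Type*} [DivisionRing K] [Ring R] [Module K R]
    [IsScalarTower K R R] [FiniteDimensional K R] :
    (∀ a b : R, (∃ x y : R, a * x + b * y = 1) → ∃ c r : R, (a + b * c) * r = 1) ∧
    (∀ a b : R, a * b = 1 → b * a = 1) := by
  have : IsArtinianRing R := isArtinian_of_tower K inferInstance
  exact ⟨StableRange.of_isArtinianRing R, fun _ _ => mul_eq_one_symm⟩
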